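/- Let G = (V, E) be a strongly connected digraph and let v, w ∈ V be distinct. Then v ↔₂ₑ w if and only if no marked vertex of the flow graph G(v) dominates w in G(v) and no marked vertex of the flow graph G^R(v) dominates w in G^R(v). -/

import Mathlib

variable {V : Type*}

/-- `p` is a path from `u` to `w` in the digraph with edge set `E`:
a nonempty list of vertices starting at `u`, ending at `w`, with consecutive edges in `E`. -/
def IsPathFrom (E : Set (V × V)) (u w : V) (p : List V) : Prop :=
  p.head? = some u ∧ p.getLast? = some w ∧ p.Chain' (fun a b => (a, b) ∈ E)

/-- There is a path from `u` to `w` in the digraph with edge set `E`. -/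
def Reaches (E : Set (V × V)) (u w : V) : Prop :=
  ∃ p, IsPathFrom E u w p

/-- Every vertex has a path to every other vertex. -/
def StronglyConnected (E : Set (V × V)) : Prop :=
  ∀ u w : V, Reaches E u w

/-- `v` and `w` are 2-edge-connected: `v = w` or, for every edge `e`,
there are paths from `v` to `w` and from `w` to `v` avoiding `e`. -/
def TwoEdgeConn (E : Set (V × V)) (v w : V) : Prop :=
  v = w ∨ ∀ e ∈ E, Reaches (E \ {e}) v w ∧ Reaches (E \ {e}) w v

/-- `w` is 2-edge-connected from `v`: for every edge `e` there is a path
from `v` to `w` avoiding `e`. -/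
def TwoEdgeConnFrom (E : Set (V × V)) (v w : V) : Prop :=
  ∀ e ∈ E, Reaches (E \ {e}) v w

/-- `u` dominates `w` in the flow graph with start vertex `s`:
every path from `s` to `w` contains `u`. -/
def Dominates (E : Set (V × V)) (s u w : V) : Prop :=
  ∀ p, IsPathFrom E s w p → u ∈ p

/-- `(u, w)` is a bridge of the flow graph with start vertex `s`:
every path from `s` to `w` contains the edge `(u, w)`. -/
def IsBridge (E : Set (V × V)) (s u w : V) : Prop :=
  (u, w) ∈ E ∧ ∀ p, IsPathFrom E s w p → (u, w) ∈ p.zip p.tail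

/-- `w` is marked in the flow graph with start vertex `s`: some bridge ends at `w`. -/
def Marked (E : Set (V × V)) (s w : V) : Prop :=
  ∃ u, IsBridge E s u w

/-- The reverse digraph: every edge direction is reversed. -/
def reverseE (E : Set (V × V)) : Set (V × V) :=
  {e | (e.2, e.1) ∈ E}

/-- `u` and `w` are mutually reachable. -/
def MutualReach (E : Set (V × V)) (u w : V) : Prop :=
  Reaches E u w ∧ Reaches E w u

/-- The number of strongly connected components: the number of equivalence
classes of the mutual-reachability relation. -/
noncomputable def numSCC (E : Set (V × V)) : ℕ :=
  Nat.card (Quot (MutualReach E))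

/-- `e` is a strong bridge: removing it increases the number of strongly
connected components. -/
def IsStrongBridge (E : Set (V × V)) (e : V × V) : Prop :=
  e ∈ E ∧ numSCC E < numSCC (E \ {e})

/-- `d` is the immediate dominator of `w` in the flow graph with start vertex `s`:
`d` is a proper dominator of `w` dominated by every proper dominator of `w`. -/
def ImmDomIs (E : Set (V × V)) (s w d : V) : Prop :=
  Dominates E s d w ∧ d ≠ w ∧ ∀ x, Dominates E s x w → x ≠ w → Dominates E s x d

/-- `r` is the deepest marked dominator `r_v` of `v`: either `r` is a marked
dominator of `v` dominated by every marked dominator of `v`, or no marked vertex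
dominates `v` and `r = s`. -/
def DeepestMarkedDomIs (E : Set (V × V)) (s v r : V) : Prop :=
  (Marked E s r ∧ Dominates E s r v ∧
    ∀ x, Marked E s x → Dominates E s x v → Dominates E s x r)
  ∨ (r = s ∧ ∀ x, Marked E s x → ¬ Dominates E s x v)

/-- `T(r)`: the vertices whose deepest marked dominator is `r`. -/
def Tset (E : Set (V × V)) (s r : V) : Set V :=
  {v | DeepestMarkedDomIs E s v r}

/-- The roots of the decomposition of the dominator tree: `s` and the marked vertices. -/
def IsRoot (E : Set (V × V)) (s r : V) : Prop :=
  r = s ∨ Marked E s r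

/-- `z` is a marked child (in the dominator tree) of a boundary vertex of `T(r)`. -/
def MarkedChildOfBoundary (E : Set (V × V)) (s r z : V) : Prop :=
  Marked E s z ∧ ∃ x ∈ Tset E s r, ImmDomIs E s z x

/-- The vertex set `V_r` of the auxiliary graph `G_r` (with `dr` playing the role
of `d(r)` when `r ≠ s`): the ordinary vertices `T(r)`, the marked children of
boundary vertices of `T(r)`, and (if `r ≠ s`) the vertex `d(r)`. -/
def auxVerts (E : Set (V × V)) (s r dr : V) : Set V :=
  Tset E s r ∪ {z | MarkedChildOfBoundary E s r z} ∪ {x | r ≠ s ∧ x = dr}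

/-- The edge set `E_r` of the auxiliary graph `G_r` (with `dr` playing the role of
`d(r)` when `r ≠ s`): edges of `G` between ordinary vertices; the edge `(v, w)` for
each boundary vertex `v ∈ T(r)` and marked child `w` of `v`; the edge `(d(r), r)` if
`r ≠ s`; and the shortcut edges of types (a), (b), (c). -/
def auxEdges (E : Set (V × V)) (s r dr : V) : Set (V × V) :=
  {e | e ∈ E ∧ e.1 ∈ Tset E s r ∧ e.2 ∈ Tset E s r} ∪
  {e | e.1 ∈ Tset E s r ∧ Marked E s e.2 ∧ ImmDomIs E s e.2 e.1} ∪
  {e | r ≠ s ∧ e = (dr, r)} ∪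
  {e | ∃ u v, (u, v) ∈ E ∧ u ∈ Tset E s r ∧ ¬ Dominates E s r v ∧ e = (u, dr)} ∪
  {e | ∃ u v z, (u, v) ∈ E ∧ v ∈ Tset E s r ∧ Dominates E s r u ∧ u ∉ Tset E s r ∧
      MarkedChildOfBoundary E s r z ∧ Dominates E s z u ∧ e = (z, v)} ∪
  {e | ∃ u v z, (u, v) ∈ E ∧ Dominates E s r u ∧ u ∉ Tset E s r ∧ ¬ Dominates E s r v ∧
      MarkedChildOfBoundary E s r z ∧ Dominates E s z u ∧ e = (z, dr)}

/-!
An edge `(u, x)` separates `w` from `s` exactly when it is a bridge of `G(s)` and its head `x`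
dominates `w`: a path from `s` to `w` that visits `x` must have entered it through `(u, x)`, while
if `x` were still reachable from `s` without `(u, x)`, then every use of this edge could be
bypassed. Hence all edges can be avoided on the way from `s` to `w` iff no marked vertex of `G(s)`
dominates `w`. Paths from `w` to `v` are handled by the same fact in `G^R(v)`.
-/

section

variable {E : Set (V × V)} {s u v w x : V} {p : List V}

theorem isChain_iff_forall_mem_zip_tail {r : V → V → Prop} :
    p.IsChain r ↔ ∀ e ∈ p.zip p.tail, r e.1 e.2 := by
  induction p using List.twoStepInduction with
  | nil => simp
  | singleton a => simp
  | cons_cons a b t _ ih => simp [List.isChain_cons_cons, ih]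

theorem isPathFrom_sdiff_singleton {e : V × V} :
    IsPathFrom (E \ {e}) u w p ↔ IsPathFrom E u w p ∧ e ∉ p.zip p.tail := by
  have chain_iff : p.IsChain (fun a b => (a, b) ∈ E \ {e}) ↔
      p.IsChain (fun a b => (a, b) ∈ E) ∧ e ∉ p.zip p.tail := by
    simp only [isChain_iff_forall_mem_zip_tail, Set.mem_sdiff, Set.mem_singleton_iff]
    grind
  rw [IsPathFrom, IsPathFrom, and_assoc, and_assoc]
  exact and_congr_right' (and_congr_right' chain_iff)

theorem IsPathFrom.reflTransGen_of_mem (hp : IsPathFrom E u w p) (hx : x ∈ p) :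
    Relation.ReflTransGen (fun a b => (a, b) ∈ E) u x := by
  obtain ⟨hhead, -, hchain⟩ := hp
  refine List.IsChain.induction _ p hchain (fun _ _ hab hua => hua.tail hab) (fun hne => ?_) x hx
  rw [(List.head_eq_iff_head?_eq_some hne).2 hhead]

theorem reaches_iff_reflTransGen :
    Reaches E u w ↔ Relation.ReflTransGen (fun a b => (a, b) ∈ E) u w := by
  constructor
  · rintro ⟨p, hp⟩
    exact hp.reflTransGen_of_mem (List.mem_of_getLast? hp.2.1)
  · intro h
    obtain ⟨p, hne, hchain, hhead, hlast⟩ := List.exists_isChain_ne_nil_of_relationReflTransGen h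
    exact ⟨p, (List.head_eq_iff_head?_eq_some hne).1 hhead,
      (List.getLast_eq_iff_getLast?_eq_some hne).1 hlast, hchain⟩

theorem IsPathFrom.reaches_of_mem (hp : IsPathFrom E u w p) (hx : x ∈ p) : Reaches E u x :=
  reaches_iff_reflTransGen.2 (hp.reflTransGen_of_mem hx)

theorem Reaches.sdiff_singleton_of_reaches_head (hsw : Reaches E s w)
    (hsx : Reaches (E \ {(u, x)}) s x) :
    Reaches (E \ {(u, x)}) s w := by
  rw [reaches_iff_reflTransGen] at *
  induction hsw with
  | refl => exact .refl
  | @tail b c _ hbc ih =>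
    by_cases hcx : c = x
    · exact hcx ▸ hsx
    · exact ih.tail ⟨hbc, fun h => hcx (congrArg Prod.snd h)⟩

theorem isBridge_iff_not_reaches :
    IsBridge E s u w ↔ (u, w) ∈ E ∧ ¬ Reaches (E \ {(u, w)}) s w := by
  simp only [IsBridge, Reaches, isPathFrom_sdiff_singleton, not_exists, not_and, not_not]

theorem not_reaches_sdiff_singleton_iff (hux : (u, x) ∈ E) (hsw : Reaches E s w) :
    ¬ Reaches (E \ {(u, x)}) s w ↔ IsBridge E s u x ∧ Dominates E s x w := by
  rw [isBridge_iff_not_reaches]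
  constructor
  · intro hsep
    refine ⟨⟨hux, fun hsx => hsep (hsw.sdiff_singleton_of_reaches_head hsx)⟩, fun p hp => ?_⟩
    by_contra hxp
    have avoids : (u, x) ∉ p.zip p.tail := fun he =>
      hxp (List.mem_of_mem_tail (List.of_mem_zip he).2)
    exact hsep ⟨p, isPathFrom_sdiff_singleton.2 ⟨hp, avoids⟩⟩
  · rintro ⟨⟨-, hbridge⟩, hdom⟩ ⟨p, hp⟩
    have hxp : x ∈ p := hdom p (isPathFrom_sdiff_singleton.1 hp).1
    exact hbridge (hp.reaches_of_mem hxp)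

theorem twoEdgeConnFrom_iff_no_marked_dominator (hsw : Reaches E s w) :
    TwoEdgeConnFrom E s w ↔ ¬ ∃ x, Marked E s x ∧ Dominates E s x w := by
  constructor
  · rintro h ⟨x, ⟨u, hbridge⟩, hdom⟩
    exact (not_reaches_sdiff_singleton_iff hbridge.1 hsw).2 ⟨hbridge, hdom⟩ (h _ hbridge.1)
  · rintro h ⟨u, x⟩ hux
    by_contra hsep
    obtain ⟨hbridge, hdom⟩ := (not_reaches_sdiff_singleton_iff hux hsw).1 hsep
    exact h ⟨x, ⟨u, hbridge⟩, hdom⟩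

theorem reaches_reverseE : Reaches (reverseE E) v w ↔ Reaches E w v := by
  rw [reaches_iff_reflTransGen, reaches_iff_reflTransGen]
  exact Relation.reflTransGen_swap (r := fun a b => (a, b) ∈ E)

theorem reverseE_sdiff_singleton (e : V × V) : reverseE (E \ {e}) = reverseE E \ {e.swap} := by
  ext ⟨a, b⟩
  simp [reverseE, Prod.ext_iff, and_comm]

theorem twoEdgeConnFrom_reverseE :
    TwoEdgeConnFrom (reverseE E) v w ↔ TwoEdgeConnFrom E w v := by
  have avoid_iff (e : V × V) :
      Reaches (reverseE E \ {e.swap}) v w ↔ Reaches (E \ {e}) w v := by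
    rw [← reverseE_sdiff_singleton, reaches_reverseE]
  exact ⟨fun h e he => (avoid_iff e).1 (h e.swap he),
    fun h e he => (avoid_iff e.swap).2 (h e.swap he)⟩

theorem twoEdgeConn_iff_twoEdgeConnFrom :
    TwoEdgeConn E v w ↔ TwoEdgeConnFrom E v w ∧ TwoEdgeConnFrom E w v := by
  constructor
  · rintro (rfl | h)
    · have refl : TwoEdgeConnFrom E v v := fun _ _ => reaches_iff_reflTransGen.2 .refl
      exact ⟨refl, refl⟩
    · exact ⟨fun e he => (h e he).1, fun e he => (h e he).2⟩
  · exact fun ⟨hvw, hwv⟩ => Or.inr fun e he => ⟨hvw e he, hwv e he⟩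

theorem two_edge_connected_iff_no_marked_dominator_general (h : MutualReach E v w) :
    TwoEdgeConn E v w ↔
      (¬ ∃ x, Marked E v x ∧ Dominates E v x w) ∧
      (¬ ∃ x, Marked (reverseE E) v x ∧ Dominates (reverseE E) v x w) := by
  rw [twoEdgeConn_iff_twoEdgeConnFrom, ← twoEdgeConnFrom_reverseE (v := v),
    twoEdgeConnFrom_iff_no_marked_dominator h.1,
    twoEdgeConnFrom_iff_no_marked_dominator (reaches_reverseE.2 h.2)]

end

/-- In a strongly connected digraph, distinct vertices `v` and `w` are
2-edge-connected if and only if no marked vertex of `G(v)` dominates `w` in `G(v)`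
and no marked vertex of `G^R(v)` dominates `w` in `G^R(v)`. -/
theorem two_edge_connected_iff_no_marked_dominator
    {V : Type*} [Fintype V] (E : Set (V × V))
    (hsc : StronglyConnected E) (v w : V) (hvw : v ≠ w) :
    TwoEdgeConn E v w ↔
      (¬ ∃ x, Marked E v x ∧ Dominates E v x w) ∧
      (¬ ∃ x, Marked (reverseE E) v x ∧ Dominates (reverseE E) v x w) :=
  two_edge_connected_iff_no_marked_dominator_general ⟨hsc v w, hsc w v⟩
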